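/- Let (S, n) be a regular local ring, let r ≥ 1 be an integer, and let a, b ⊆ S be ideals such that: (1) S/a is a Cohen–Macaulay ring with Krull dimension dim(S/a) = dim(S) − r; (2) b is generated by r+1 elements and b ⊊ a (strict inclusion); (3) the localizations satisfy a_q = b_q for every prime ideal q of S with dim(S/q) > dim(S) − (r+1). Then the quotient module a/b is a Cohen–Macaulay S-module and dim(Supp(a/b)) = dim(S) − (r+1). -/

import Mathlib

open IsLocalRing

/-- The depth of a module `M` over a Noetherian local ring `R`: the supremum of the
lengths of `M`-regular sequences consisting of elements of the maximal ideal. -/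
noncomputable def moduleDepth (R M : Type*) [CommRing R] [IsLocalRing R]
    [AddCommGroup M] [Module R M] : ℕ∞ :=
  sSup {n : ℕ∞ | ∃ rs : List R, (rs.length : ℕ∞) = n ∧
    (∀ r ∈ rs, r ∈ maximalIdeal R) ∧ RingTheory.Sequence.IsRegular M rs}

/-!
The argument uses only that `S` is Gorenstein. Write `𝔟 = I + (g)` with `I` generated by an
`S`-regular sequence of length `r`, and put `M = 𝔞/I`. The sequence `0 → M → S/I → S/𝔞 → 0` shows
that `depth M ≥ dim S - r ≥ dim M`. Since `dim 𝔞/𝔟 < depth M`, there is no nonzero map `𝔞/𝔟 → M`,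
so whatever kills the class of `g` in `M` kills all of `M`, and `0 → S/Ann M → M → 𝔞/𝔟 → 0` is
exact. It remains to see that `S/Ann M` has depth at least `dim S - r`: because
`Ext^{r+1}(S/𝔞, S) = 0`, the module `Ext^r(S/I, S) ≃ S/I` (Rees) surjects onto `Ext^r(M, S)`, which
is thereby identified with `S/Ann M`, and as a dual it inherits the depth of the Cohen-Macaulay
module `M`.
-/

open CategoryTheory Abelian RingTheory.Sequence

open scoped Pointwise

universe u

/-! ### Ext modules -/

/-- The module `Ext^i_R(M, N)` of two unbundled `R`-modules. -/
abbrev ModuleExt (R M N : Type u) [CommRing R] [AddCommGroup M] [Module R M]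
    [AddCommGroup N] [Module R N] (i : ℕ) : Type u :=
  Ext (ModuleCat.of R M) (ModuleCat.of R N) i

namespace ModuleExt

section CommRing

variable {R M N M₁ M₂ M₃ : Type u} [CommRing R]
  [AddCommGroup M] [Module R M] [AddCommGroup N] [Module R N] [AddCommGroup M₁] [Module R M₁]
  [AddCommGroup M₂] [Module R M₂] [AddCommGroup M₃] [Module R M₃] {i : ℕ}

lemma subsingleton_zero_iff : Subsingleton (ModuleExt R M N 0) ↔ Subsingleton (M →ₗ[R] N) :=
  (Ext.addEquiv₀.trans ModuleCat.homAddEquiv).subsingleton_congr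

lemma subsingleton_of_subsingleton_left [Subsingleton M] (i : ℕ) :
    Subsingleton (ModuleExt R M N i) :=
  have := (ModuleCat.isZero_of_subsingleton (ModuleCat.of R M)).hasProjectiveDimensionLT_zero
  HasProjectiveDimensionLT.subsingleton (ModuleCat.of R M) 0 i i.zero_le _

lemma subsingleton_congr_left (e : M₁ ≃ₗ[R] M₂) :
    Subsingleton (ModuleExt R M₁ N i) ↔ Subsingleton (ModuleExt R M₂ N i) :=
  (((extFunctor i).mapIso e.symm.toModuleIso.op).app
    (ModuleCat.of R N)).addCommGroupIsoToAddEquiv.subsingleton_congr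

lemma subsingleton_congr_right (e : M₁ ≃ₗ[R] M₂) :
    Subsingleton (ModuleExt R N M₁ i) ↔ Subsingleton (ModuleExt R N M₂ i) :=
  ((extFunctorObj (ModuleCat.of R N) i).mapIso
    e.toModuleIso).addCommGroupIsoToAddEquiv.subsingleton_congr

section ShortExact

variable {f : M₁ →ₗ[R] M₂} {g : M₂ →ₗ[R] M₃} (hfg : Function.Exact f g)
  (hf : Function.Injective f) (hg : Function.Surjective g)
include hf hg

lemma shortExact : (ModuleCat.shortComplexOfCompEqZero f g hfg.linearMap_comp_eq_zero).ShortExact :=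
  ModuleCat.shortComplex_shortExact _ hfg hf hg

include hfg

lemma subsingleton_middle_left (h₁ : Subsingleton (ModuleExt R M₁ N i))
    (h₃ : Subsingleton (ModuleExt R M₃ N i)) : Subsingleton (ModuleExt R M₂ N i) := by
  refine subsingleton_of_forall_eq 0 fun e => ?_
  obtain ⟨e₃, rfl⟩ := Ext.contravariant_sequence_exact₂ (shortExact hfg hf hg) _ e
    (h₁.elim _ _)
  rw [h₃.elim e₃ 0, Ext.comp_zero]

lemma subsingleton_cokernel_right (h₂ : Subsingleton (ModuleExt R N M₂ i))
    (h₁ : Subsingleton (ModuleExt R N M₁ (i + 1))) : Subsingleton (ModuleExt R N M₃ i) := by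
  refine subsingleton_of_forall_eq 0 fun e => ?_
  obtain ⟨e₂, rfl⟩ := Ext.covariant_sequence_exact₃ _ (shortExact hfg hf hg) e rfl (h₁.elim _ _)
  rw [h₂.elim e₂ 0, Ext.zero_comp]

lemma subsingleton_kernel_right (h₂ : Subsingleton (ModuleExt R N M₂ i))
    (h₃ : ∀ j, j + 1 = i → Subsingleton (ModuleExt R N M₃ j)) :
    Subsingleton (ModuleExt R N M₁ i) := by
  have hse := shortExact hfg hf hg
  cases i with
  | zero =>
    have := hse.mono_f
    exact (Ext.postcomp_mk₀_injective_of_mono (ModuleCat.of R N)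
      (ModuleCat.ofHom f)).subsingleton
  | succ j =>
    refine subsingleton_of_forall_eq 0 fun e => ?_
    obtain ⟨e₃, rfl⟩ := Ext.covariant_sequence_exact₁ _ hse e (h₂.elim _ _) rfl
    rw [(h₃ j rfl).elim e₃ 0, Ext.zero_comp]

end ShortExact

lemma mk₀_smul_id_comp (x : R) (e : ModuleExt R M N i) :
    (Ext.mk₀ (x • 𝟙 (ModuleCat.of R M))).comp e (zero_add i) = x • e := by
  simp [Ext.mk₀_smul]

lemma smul_eq_zero_of_mem_annihilator {x : R} (hx : x ∈ Module.annihilator R M)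
    (e : ModuleExt R M N i) : x • e = 0 := by
  have hx0 : x • 𝟙 (ModuleCat.of R M) = 0 := by
    ext y
    exact Module.mem_annihilator.mp hx y
  rw [← mk₀_smul_id_comp, hx0, Ext.mk₀_zero, Ext.zero_comp]

section QuotSMulTop

variable {x : R} (hx : IsSMulRegular M x)
include hx

lemma isSMulRegular_of_subsingleton (h : Subsingleton (ModuleExt R (QuotSMulTop x M) N i)) :
    IsSMulRegular (ModuleExt R M N i) x := by
  have hx' : IsSMulRegular (ModuleCat.of R M) x := hx
  refine IsSMulRegular.of_right_eq_zero_of_smul fun e he => ?_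
  obtain ⟨e', rfl⟩ := Ext.contravariant_sequence_exact₂ hx'.smulShortComplex_shortExact _ e
    ((mk₀_smul_id_comp x e).trans he)
  rw [h.elim e' 0]
  exact Ext.comp_zero ..

/-- The class in `Ext^1(M/xM, M)` of the extension `0 → M → M → M/xM → 0`. -/
noncomputable def smulExtClass : ModuleExt R (QuotSMulTop x M) M 1 :=
  have hx' : IsSMulRegular (ModuleCat.of R M) x := hx
  hx'.smulShortComplex_shortExact.extClass

variable (N i) in
/-- The connecting homomorphism of the long exact sequence of `Ext(-, N)` attached to
`0 → M → M → M/xM → 0`. -/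
noncomputable def connecting :
    ModuleExt R M N i →ₗ[R] ModuleExt R (QuotSMulTop x M) N (i + 1) :=
  (smulExtClass hx).precompOfLinear R (ModuleCat.of R N) (add_comm 1 i)

lemma ker_connecting :
    LinearMap.ker (connecting N i hx) = x • (⊤ : Submodule R (ModuleExt R M N i)) := by
  have hx' : IsSMulRegular (ModuleCat.of R M) x := hx
  ext e
  rw [LinearMap.mem_ker, Submodule.mem_smul_pointwise_iff_exists]
  constructor
  · intro he
    obtain ⟨e', he'⟩ := Ext.contravariant_sequence_exact₁ hx'.smulShortComplex_shortExact _ e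
      (add_comm 1 i) he
    exact ⟨e', Submodule.mem_top, (mk₀_smul_id_comp x _).symm.trans he'⟩
  · rintro ⟨e', -, rfl⟩
    rw [map_smul]
    exact smul_eq_zero_of_mem_annihilator (QuotSMulTop.mem_annihilator _ x) _

lemma connecting_surjective (h : Subsingleton (ModuleExt R M N (i + 1))) :
    Function.Surjective (connecting N i hx) := fun e =>
  have hx' : IsSMulRegular (ModuleCat.of R M) x := hx
  Ext.contravariant_sequence_exact₃ hx'.smulShortComplex_shortExact _ e (h.elim _ _) (add_comm 1 i)

/-- If `Ext^{i+1}(M, N) = 0`, then `Ext^i(M, N) / x ≃ Ext^{i+1}(M/xM, N)`. -/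
noncomputable def quotSMulTopEquiv (h : Subsingleton (ModuleExt R M N (i + 1))) :
    QuotSMulTop x (ModuleExt R M N i) ≃ₗ[R] ModuleExt R (QuotSMulTop x M) N (i + 1) :=
  (Submodule.quotEquivOfEq _ _ (ker_connecting hx).symm).trans
    ((connecting N i hx).quotKerEquivOfSurjective (connecting_surjective hx h))

end QuotSMulTop

end CommRing

section IsLocalRing

variable {R M N : Type u} [CommRing R] [IsLocalRing R] [IsNoetherianRing R] [AddCommGroup M]
  [Module R M] [Module.Finite R M] [AddCommGroup N] [Module R N] [Module.Finite R N] {i : ℕ}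

lemma subsingleton_of_quotSMulTop {x : R} (hxm : x ∈ maximalIdeal R) (hx : IsSMulRegular M x)
    (h : Subsingleton (ModuleExt R (QuotSMulTop x M) N (i + 1))) :
    Subsingleton (ModuleExt R M N i) := by
  have : Module.Finite R (ModuleExt R M N i) := ModuleCat.finite_ext ..
  have htop : (⊤ : Submodule R (ModuleExt R M N i)) = x • ⊤ := by
    rw [← ker_connecting hx, eq_comm, eq_top_iff]
    exact fun e _ => h.elim _ _
  by_contra hnt
  have := not_subsingleton_iff_nontrivial.mp hnt
  exact Submodule.top_ne_pointwise_smul_of_mem_jacobson_annihilator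
    (maximalIdeal_le_jacobson _ hxm) htop

end IsLocalRing

end ModuleExt

/-! ### Ischebeck's vanishing theorem -/

lemma isSMulRegular_quotient_of_notMem {R : Type*} [CommRing R] {P : Ideal R} [hP : P.IsPrime]
    {x : R} (hx : x ∉ P) : IsSMulRegular (R ⧸ P) x :=
  (isSMulRegular_quotient_iff_mem_of_smul_mem ..).mpr fun _ hy => (hP.mem_or_mem hy).resolve_left hx

section SupportDim

variable {R M : Type*} [CommRing R] [IsLocalRing R] [IsNoetherianRing R] [AddCommGroup M]
  [Module R M]

lemma supportDim_quotSMulTop_le [Module.Finite R M] {x : R} (hxm : x ∈ maximalIdeal R)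
    (hx : IsSMulRegular M x) {n : ℕ} (h : Module.supportDim R M ≤ (n + 1 : ℕ)) :
    Module.supportDim R (QuotSMulTop x M) ≤ n := by
  rw [← Module.supportDim_quotSMulTop_succ_eq_supportDim hx hxm, Nat.cast_succ] at h
  exact ENat.WithBot.add_le_add_one_right_iff.mp h

variable (R M) in
lemma exists_supportDim_le_natCast : ∃ n : ℕ, Module.supportDim R M ≤ n := by
  obtain ⟨n, hn⟩ := WithBot.ne_bot_iff_exists.mp (ringKrullDim_ne_bot (R := R))
  obtain ⟨n, rfl⟩ := ENat.ne_top_iff_exists.mp fun h : n = ⊤ =>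
    ringKrullDim_ne_top (hn.symm.trans (h ▸ rfl))
  exact ⟨n, (Module.supportDim_le_ringKrullDim R M).trans hn.ge⟩

end SupportDim

namespace ModuleExt

section Ischebeck

variable {R M N : Type u} [CommRing R] [IsLocalRing R] [IsNoetherianRing R] [AddCommGroup M]
  [Module R M] [Module.Finite R M] [AddCommGroup N] [Module R N] [Module.Finite R N] {i : ℕ}

lemma subsingleton_of_supportDim_le {n : ℕ} (hM : Module.supportDim R M ≤ n)
    (h : ∀ j, i ≤ j → j ≤ i + n → Subsingleton (ModuleExt R (R ⧸ maximalIdeal R) N j)) :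
    Subsingleton (ModuleExt R M N i) := by
  induction n using Nat.strong_induction_on generalizing M i with
  | _ n ih =>
  revert h
  refine IsNoetherianRing.induction_on_isQuotientEquivQuotientPrime R ‹Module.Finite R M›
    (motive := fun M _ _ _ => Module.supportDim R M ≤ n →
      (∀ j, i ≤ j → j ≤ i + n → Subsingleton (ModuleExt R (R ⧸ maximalIdeal R) N j)) →
        Subsingleton (ModuleExt R M N i)) ?_ ?_ ?_ hM
  · exact fun M _ _ _ _ _ _ => subsingleton_of_subsingleton_left i
  · intro M _ _ _ p e hd h
    rw [subsingleton_congr_left e]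
    rw [Module.supportDim_eq_of_equiv e] at hd
    by_cases hp : maximalIdeal R ≤ p.1
    · rw [← (IsLocalRing.maximalIdeal.isMaximal R).eq_of_le p.2.ne_top hp]
      exact h i le_rfl (by omega)
    · obtain ⟨x, hxm, hxp⟩ := SetLike.not_le_iff_exists.mp hp
      have hx := isSMulRegular_quotient_of_notMem hxp
      refine subsingleton_of_quotSMulTop hxm hx ?_
      cases n with
      | zero =>
        rw [← Module.supportDim_quotSMulTop_succ_eq_supportDim hx hxm, Nat.cast_zero,
          ENat.WithBot.add_one_le_zero_iff, Module.supportDim_eq_bot_iff_subsingleton] at hd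
        exact subsingleton_of_subsingleton_left _
      | succ n =>
        exact ih n n.lt_succ_self (supportDim_quotSMulTop_le hxm hx hd)
          fun j hj hj' => h j (by omega) (by omega)
  · intro M₁ _ _ _ M₂ _ _ _ M₃ _ _ _ f g hf hg hfg h₁ h₃ hd h
    exact subsingleton_middle_left hfg hf hg
      (h₁ ((Module.supportDim_le_of_injective f hf).trans hd) h)
      (h₃ ((Module.supportDim_le_of_surjective g hg).trans hd) h)

end Ischebeck

end ModuleExt

/-- `R/𝔪`-Ext vanishing form of `n ≤ depth M`: the groups `Ext^i(R/𝔪, M)` vanish for `i < n`. In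
contrast to the length of a maximal regular sequence it makes sense for `M = 0`, where it holds for
all `n`. -/
def HasDepthGE (R M : Type u) [CommRing R] [IsLocalRing R] [AddCommGroup M] [Module R M]
    (n : ℕ) : Prop :=
  ∀ i < n, Subsingleton (ModuleExt R (R ⧸ maximalIdeal R) M i)

/-- `Ext^i(R/𝔪, M)` vanishes outside degree `d`: for finite `M` this says that `M` has depth at
least `d` and injective dimension at most `d`. -/
def IsExtConcentrated (R M : Type u) [CommRing R] [IsLocalRing R] [AddCommGroup M] [Module R M]
    (d : ℕ) : Prop :=
  ∀ i ≠ d, Subsingleton (ModuleExt R (R ⧸ maximalIdeal R) M i)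

/-- A (Noetherian) local ring is Gorenstein if `Ext^i(R/𝔪, R)` vanishes for `i ≠ dim R`. -/
def IsGorensteinLocalRing (R : Type u) [CommRing R] [IsLocalRing R] : Prop :=
  ∃ d : ℕ, ringKrullDim R = d ∧ IsExtConcentrated R R d

namespace ModuleExt

variable {R M N : Type u} [CommRing R] [IsLocalRing R] [IsNoetherianRing R] [AddCommGroup M]
  [Module R M] [Module.Finite R M] [AddCommGroup N] [Module R N] [Module.Finite R N] {d i : ℕ}

lemma subsingleton_of_isWeaklyRegular {rs : List R} (hN : IsExtConcentrated R N d)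
    (hrs : ∀ x ∈ rs, x ∈ maximalIdeal R) (hreg : IsWeaklyRegular M rs) (h : d < i + rs.length) :
    Subsingleton (ModuleExt R M N i) := by
  induction rs generalizing M i with
  | nil =>
    rw [List.length_nil, add_zero] at h
    obtain ⟨n, hn⟩ := exists_supportDim_le_natCast R M
    exact subsingleton_of_supportDim_le hn fun j hj _ => hN j (by omega)
  | cons x rs ih =>
    rw [List.forall_mem_cons] at hrs
    rw [isWeaklyRegular_cons_iff] at hreg
    rw [List.length_cons] at h
    exact subsingleton_of_quotSMulTop hrs.1 hreg.1 (ih hrs.2 hreg.2 (by omega))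

lemma isWeaklyRegular {rs : List R} (hN : IsExtConcentrated R N d)
    (hrs : ∀ x ∈ rs, x ∈ maximalIdeal R) (hreg : IsWeaklyRegular M rs)
    (hdim : Module.supportDim R M ≤ rs.length) (h : i + rs.length = d) :
    IsWeaklyRegular (ModuleExt R M N i) rs := by
  induction rs generalizing M i with
  | nil => exact IsWeaklyRegular.nil _ _
  | cons x rs ih =>
    have hsucc : Subsingleton (ModuleExt R M N (i + 1)) :=
      subsingleton_of_isWeaklyRegular hN hrs hreg (by omega)
    rw [List.forall_mem_cons] at hrs
    rw [isWeaklyRegular_cons_iff] at hreg ⊢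
    rw [List.length_cons] at h hdim
    have hdim' := supportDim_quotSMulTop_le hrs.1 hreg.1 hdim
    have hquot : Subsingleton (ModuleExt R (QuotSMulTop x M) N i) :=
      subsingleton_of_supportDim_le hdim' fun j _ hj => hN j (by omega)
    exact ⟨isSMulRegular_of_subsingleton hreg.1 hquot,
      ((quotSMulTopEquiv hreg.1 hsucc).isWeaklyRegular_congr rs).mpr
        (ih hrs.2 hreg.2 hdim' (by omega))⟩

/-! ### Rees's theorem -/

section Rees

variable {R N L : Type u} [CommRing R] [AddCommGroup N] [Module R N] [AddCommGroup L] [Module R L]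
  {i : ℕ}

section QuotSMulTop

variable {x : R} (hx : IsSMulRegular L x)

variable (hxN : x ∈ Module.annihilator R N)
include hx hxN

lemma exists_comp_smulExtClass_eq (e : ModuleExt R N L (i + 1)) :
    ∃ e' : ModuleExt R N (QuotSMulTop x L) i, e'.comp (smulExtClass hx) rfl = e := by
  have hx' : IsSMulRegular (ModuleCat.of R L) x := hx
  have hxe : e.comp (Ext.mk₀ (x • 𝟙 (ModuleCat.of R L))) (add_zero _) = 0 := by
    rw [← Ext.smul_eq_comp_mk₀, smul_eq_zero_of_mem_annihilator hxN]
  exact Ext.covariant_sequence_exact₁ _ hx'.smulShortComplex_shortExact e hxe rfl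

lemma comp_smulExtClass_bijective (h : Subsingleton (ModuleExt R N L i)) :
    Function.Bijective fun e : ModuleExt R N (QuotSMulTop x L) i =>
      (e.comp (smulExtClass hx) rfl : ModuleExt R N L (i + 1)) := by
  have hx' : IsSMulRegular (ModuleCat.of R L) x := hx
  refine ⟨(injective_iff_map_eq_zero (Ext.postcomp (smulExtClass hx) _ rfl)).mpr
    fun e he => ?_, exists_comp_smulExtClass_eq hx hxN⟩
  obtain ⟨e', rfl⟩ := Ext.covariant_sequence_exact₃ _ hx'.smulShortComplex_shortExact e rfl he
  rw [h.elim e' 0]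
  exact Ext.zero_comp ..

lemma subsingleton_of_quotSMulTop_right
    (h : ∀ j, j + 1 = i → Subsingleton (ModuleExt R N (QuotSMulTop x L) j)) :
    Subsingleton (ModuleExt R N L i) := by
  cases i with
  | zero =>
    refine subsingleton_zero_iff.mpr (subsingleton_of_forall_eq 0 fun f => ?_)
    ext y
    refine hx.right_eq_zero_of_smul ?_
    rw [← map_smul, Module.mem_annihilator.mp hxN, map_zero]
  | succ j =>
    refine subsingleton_of_forall_eq 0 fun e => ?_
    obtain ⟨e', rfl⟩ := exists_comp_smulExtClass_eq hx hxN e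
    rw [(h j rfl).elim e' 0, Ext.zero_comp]

end QuotSMulTop

lemma subsingleton_of_ofList_le_annihilator {rs : List R} (hL : IsWeaklyRegular L rs)
    (hN : Ideal.ofList rs ≤ Module.annihilator R N) (h : i < rs.length) :
    Subsingleton (ModuleExt R N L i) := by
  induction rs generalizing L i with
  | nil => exact absurd h i.not_lt_zero
  | cons x rs ih =>
    rw [isWeaklyRegular_cons_iff] at hL
    rw [Ideal.ofList_cons, sup_le_iff, Ideal.span_singleton_le_iff_mem] at hN
    rw [List.length_cons] at h
    exact subsingleton_of_quotSMulTop_right hL.1 hN.1 fun j hj => ih hL.2 hN.2 (by omega)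

-- Rees: composing the extension classes of the steps of `rs` shifts `Hom` up to `Ext^{length rs}`.
lemma exists_comp_bijective {rs : List R} (hL : IsWeaklyRegular L rs) :
    ∃ c : ModuleExt R (L ⧸ (Ideal.ofList rs • ⊤ : Submodule R L)) L rs.length,
      ∀ (N : Type u) [AddCommGroup N] [Module R N], Ideal.ofList rs ≤ Module.annihilator R N →
        Function.Bijective fun f : N →ₗ[R] L ⧸ (Ideal.ofList rs • ⊤ : Submodule R L) =>
          (Ext.mk₀ (ModuleCat.ofHom f)).comp c (zero_add _) := by
  induction rs generalizing L with
  | nil =>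
    let e : (L ⧸ (Ideal.ofList ([] : List R) • ⊤ : Submodule R L)) ≃ₗ[R] L :=
      Submodule.quotEquivOfEqBot _ (by rw [Ideal.ofList_nil, Submodule.bot_smul])
    refine ⟨Ext.mk₀ e.toModuleIso.hom, fun N _ _ _ => ?_⟩
    simp only [Ext.mk₀_comp_mk₀]
    exact (Ext.mk₀_bijective _ _).comp (ModuleCat.homEquiv.symm.bijective.comp
      (e.congrRight (M := N)).bijective)
  | cons x rs ih =>
    have hL' := (isWeaklyRegular_cons_iff L x rs).mp hL
    obtain ⟨c, hc⟩ := ih hL'.2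
    let e := Submodule.quotOfListConsSMulTopEquivQuotSMulTopInner L x rs
    refine ⟨(Ext.mk₀ e.toModuleIso.hom).comp (c.comp (smulExtClass hL'.1) rfl) (zero_add _),
      fun N _ _ hN => ?_⟩
    have hvanish : Subsingleton (ModuleExt R N L rs.length) :=
      subsingleton_of_ofList_le_annihilator hL hN (Nat.lt_succ_self _)
    rw [Ideal.ofList_cons, sup_le_iff, Ideal.span_singleton_le_iff_mem] at hN
    refine (congrArg Function.Bijective (funext fun f => ?_)).mpr <|
      (comp_smulExtClass_bijective hL'.1 hN.1 hvanish).comp <|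
        (hc N hN.2).comp (e.congrRight (M := N)).bijective
    exact (Ext.mk₀_comp_mk₀_assoc ..).trans <|
      (Ext.comp_assoc _ c (smulExtClass hL'.1) (zero_add _) rfl (by simp)).symm

end Rees

end ModuleExt

/-! ### Depth -/

lemma IsExtConcentrated.hasDepthGE {R M : Type u} [CommRing R] [IsLocalRing R] [AddCommGroup M]
    [Module R M] {d : ℕ} (h : IsExtConcentrated R M d) : HasDepthGE R M d :=
  fun i hi => h i hi.ne

namespace HasDepthGE

section IsLocalRing

variable {R M N L : Type u} [CommRing R] [IsLocalRing R] [AddCommGroup M] [Module R M]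
  [AddCommGroup N] [Module R N] [AddCommGroup L] [Module R L] {n : ℕ}

lemma mono {m : ℕ} (h : HasDepthGE R M n) (hmn : m ≤ n) : HasDepthGE R M m :=
  fun i hi => h i (hi.trans_le hmn)

lemma of_isWeaklyRegular {rs : List R} (hrs : ∀ x ∈ rs, x ∈ maximalIdeal R)
    (hreg : IsWeaklyRegular M rs) : HasDepthGE R M rs.length := fun _ hi =>
  ModuleExt.subsingleton_of_ofList_le_annihilator hreg
    ((Ideal.span_le.mpr hrs).trans_eq Ideal.annihilator_quotient.symm) hi

section ShortExact

variable {f : M →ₗ[R] N} {g : N →ₗ[R] L} (hfg : Function.Exact f g)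
  (hf : Function.Injective f) (hg : Function.Surjective g)
include hfg hf hg

lemma kernel (hN : HasDepthGE R N (n + 1)) (hL : HasDepthGE R L n) : HasDepthGE R M (n + 1) :=
  fun i hi => ModuleExt.subsingleton_kernel_right hfg hf hg (hN i hi)
    fun j hj => hL j (by omega)

lemma cokernel (hM : HasDepthGE R M (n + 1)) (hN : HasDepthGE R N n) : HasDepthGE R L n :=
  fun i hi => ModuleExt.subsingleton_cokernel_right hfg hf hg (hN i hi)
    (hM (i + 1) (Nat.succ_lt_succ hi))

end ShortExact

lemma congr (e : M ≃ₗ[R] N) (h : HasDepthGE R M n) : HasDepthGE R N n :=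
  fun i hi => (ModuleExt.subsingleton_congr_right e).mp (h i hi)

lemma quotSMulTop {x : R} (hx : IsSMulRegular M x) (h : HasDepthGE R M (n + 1)) :
    HasDepthGE R (QuotSMulTop x M) n :=
  cokernel (LinearMap.exact_lsmul_mkQ_smul_top M x) hx (Submodule.mkQ_surjective _) h
    (h.mono n.le_succ)

lemma quotient_ofList_smul_top {rs : List R} (hreg : IsWeaklyRegular M rs)
    (h : HasDepthGE R M (n + rs.length)) :
    HasDepthGE R (M ⧸ (Ideal.ofList rs • ⊤ : Submodule R M)) n := by
  induction rs generalizing M with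
  | nil =>
    exact h.congr (Submodule.quotEquivOfEqBot _ (by rw [Ideal.ofList_nil, Submodule.bot_smul])).symm
  | cons x rs ih =>
    rw [isWeaklyRegular_cons_iff] at hreg
    exact (ih hreg.2 (h.quotSMulTop hreg.1)).congr
      (Submodule.quotOfListConsSMulTopEquivQuotSMulTopInner M x rs).symm

end IsLocalRing

section IsNoetherianRing

variable {R M : Type u} [CommRing R] [IsLocalRing R] [IsNoetherianRing R] [AddCommGroup M]
  [Module R M] [Module.Finite R M] {n : ℕ}

lemma exists_isRegular [Nontrivial M] (h : HasDepthGE R M n) :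
    ∃ rs : List R, rs.length = n ∧ (∀ x ∈ rs, x ∈ maximalIdeal R) ∧ IsRegular M rs :=
  ModuleCat.exists_isRegular_of_exists_subsingleton_ext (maximalIdeal R) n (ModuleCat.of R M)
    (Submodule.top_ne_ideal_smul_of_le_jacobson_annihilator
      (maximalIdeal_le_jacobson _)).symm.lt_top
    (ModuleCat.of R (R ⧸ maximalIdeal R))
    (by rw [Module.support_eq_zeroLocus, Ideal.annihilator_quotient]) h

lemma subsingleton_linearMap {N : Type u} [AddCommGroup N] [Module R N] [Module.Finite R N]
    (h : HasDepthGE R M n) (hN : Module.supportDim R N < n) : Subsingleton (N →ₗ[R] M) := by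
  cases n with
  | zero =>
    rw [Nat.cast_zero, WithBot.lt_zero_iff_eq_bot,
      Module.supportDim_eq_bot_iff_subsingleton] at hN
    infer_instance
  | succ n =>
    exact ModuleExt.subsingleton_zero_iff.mp <| ModuleExt.subsingleton_of_supportDim_le
      (ENat.WithBot.lt_add_one_iff.mp hN) fun j _ hj => h j (by omega)

lemma natCast_le_ringKrullDim_quotient (h : HasDepthGE R M n) {P : Ideal R}
    (hP : P ∈ associatedPrimes R M) : (n : WithBot ℕ∞) ≤ ringKrullDim (R ⧸ P) := by
  obtain ⟨_, f, hf⟩ := (isAssociatedPrime_iff_exists_injective_linearMap ..).mp hP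
  by_contra! hlt
  rw [← Module.supportDim_quotient_eq_ringKrullDim] at hlt
  have := h.subsingleton_linearMap hlt
  refine one_ne_zero (hf ?_ : (1 : R ⧸ P) = 0)
  rw [Subsingleton.elim f 0, LinearMap.zero_apply, LinearMap.zero_apply]

lemma natCast_le_supportDim [Nontrivial M] (h : HasDepthGE R M n) :
    (n : WithBot ℕ∞) ≤ Module.supportDim R M := by
  obtain ⟨P, hP⟩ := associatedPrimes.nonempty R M
  obtain ⟨_, f, hf⟩ := (isAssociatedPrime_iff_exists_injective_linearMap ..).mp hP
  refine (h.natCast_le_ringKrullDim_quotient hP).trans ?_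
  rw [← Module.supportDim_quotient_eq_ringKrullDim]
  exact Module.supportDim_le_of_injective f hf

end IsNoetherianRing

end HasDepthGE

lemma natCast_le_moduleDepth_iff {R M : Type u} [CommRing R] [IsLocalRing R] [IsNoetherianRing R]
    [AddCommGroup M] [Module R M] [Module.Finite R M] [Nontrivial M] {n : ℕ} :
    (n : ℕ∞) ≤ moduleDepth R M ↔ HasDepthGE R M n := by
  constructor
  · intro h
    cases n with
    | zero => exact fun i hi => absurd hi i.not_lt_zero
    | succ n =>
      obtain ⟨_, ⟨rs, rfl, hrs, hreg⟩, hlt⟩ :=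
        lt_sSup_iff.mp ((Nat.cast_lt.mpr n.lt_succ_self).trans_le h)
      exact (HasDepthGE.of_isWeaklyRegular hrs hreg.1).mono (Nat.cast_lt.mp hlt)
  · intro h
    obtain ⟨rs, rfl, hrs, hreg⟩ := h.exists_isRegular
    exact le_sSup ⟨rs, rfl, hrs, hreg⟩

lemma HasDepthGE.moduleDepth_eq_and_supportDim_eq {R M : Type u} [CommRing R] [IsLocalRing R]
    [IsNoetherianRing R] [AddCommGroup M] [Module R M] [Module.Finite R M] [Nontrivial M] {n : ℕ}
    (h : HasDepthGE R M n) (hdim : Module.supportDim R M ≤ n) :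
    moduleDepth R M = n ∧ Module.supportDim R M = n := by
  refine ⟨le_antisymm (ENat.forall_natCast_le_iff_le.mp fun m hm => ?_)
    (natCast_le_moduleDepth_iff.mpr h), hdim.antisymm h.natCast_le_supportDim⟩
  exact Nat.cast_le.mpr <| Nat.cast_le.mp <|
    (natCast_le_moduleDepth_iff.mp hm).natCast_le_supportDim.trans hdim

/-! ### Duality over Gorenstein rings -/

namespace HasDepthGE

variable {R M : Type u} [CommRing R] [IsLocalRing R] [IsNoetherianRing R] [AddCommGroup M]
  [Module R M] [Module.Finite R M] {n : ℕ} {g : M}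

lemma torsionOf_eq_annihilator (hM : HasDepthGE R M n)
    (hdim : Module.supportDim R (M ⧸ R ∙ g) < n) :
    Ideal.torsionOf R M g = Module.annihilator R M := by
  refine le_antisymm (fun s hs => Module.mem_annihilator.mpr fun y => ?_)
    fun s hs => Module.mem_annihilator.mp hs g
  have := hM.subsingleton_linearMap hdim
  let smulFactor : (M ⧸ R ∙ g) →ₗ[R] M :=
    Submodule.liftQSpanSingleton g (LinearMap.lsmul R M s) ((Ideal.mem_torsionOf_iff g s).mp hs)
  exact LinearMap.congr_fun (Subsingleton.elim smulFactor 0) (Submodule.Quotient.mk y)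

-- `R/Ann M → M → M/Rg → 0` with first map `s ↦ s • g` is also exact on the left.
lemma quotient_span_singleton (hM : HasDepthGE R M (n + 1))
    (hann : HasDepthGE R (R ⧸ Module.annihilator R M) (n + 1))
    (hdim : Module.supportDim R (M ⧸ R ∙ g) ≤ n) : HasDepthGE R (M ⧸ R ∙ g) n := by
  have htors := hM.torsionOf_eq_annihilator (ENat.WithBot.lt_add_one_iff.mpr hdim)
  exact cokernel (LinearMap.exact_subtype_mkQ _) (R ∙ g).subtype_injective (R ∙ g).mkQ_surjective
    (hann.congr ((Submodule.quotEquivOfEq _ _ htors.symm).trans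
      (Ideal.quotTorsionOfEquivSpanSingleton R M g))) (hM.mono n.le_succ)

lemma moduleExt {N : Type u} [AddCommGroup N] [Module R N] [Module.Finite R N] [Nontrivial M]
    {d i : ℕ} (hN : IsExtConcentrated R N d) (hM : HasDepthGE R M n)
    (hdim : Module.supportDim R M ≤ n) (h : i + n = d) : HasDepthGE R (ModuleExt R M N i) n := by
  obtain ⟨rs, rfl, hrs, hreg⟩ := hM.exists_isRegular
  exact of_isWeaklyRegular hrs (ModuleExt.isWeaklyRegular hN hrs hreg.1 hdim h)

end HasDepthGE

lemma le_annihilator_quotient_smul_top {R M : Type*} [CommRing R] [AddCommGroup M] [Module R M]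
    (I : Ideal R) : I ≤ Module.annihilator R (M ⧸ (I • ⊤ : Submodule R M)) := by
  intro x hx
  refine Module.mem_annihilator.mpr fun y => ?_
  obtain ⟨y, rfl⟩ := Submodule.Quotient.mk_surjective _ y
  exact (Submodule.Quotient.mk_eq_zero _).mpr (Submodule.smul_mem_smul hx Submodule.mem_top)

lemma exists_eq_smul_id_of_quotient {R : Type*} [CommRing R] {I : Submodule R R}
    (f : (R ⧸ I) →ₗ[R] R ⧸ I) : ∃ s : R, f = s • LinearMap.id := by
  obtain ⟨s, hs⟩ := Submodule.Quotient.mk_surjective I (f (Submodule.Quotient.mk 1))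
  refine ⟨s, Submodule.linearMap_qext _ (LinearMap.ext_ring (hs.symm.trans ?_))⟩
  change _ = s • (Submodule.Quotient.mk 1 : R ⧸ I)
  rw [← Submodule.Quotient.mk_smul, smul_eq_mul, mul_one]

namespace ModuleExt

variable {R M C : Type u} [CommRing R] [AddCommGroup M] [Module R M] [AddCommGroup C] [Module R C]

-- The isomorphism takes `1` to the image of `f` under Rees's isomorphism
-- `Hom(M, R/(rs)) ≃ Ext^r(M, R)`.
lemma nonempty_quotient_annihilator_equiv {rs : List R} (hrs : IsWeaklyRegular R rs)
    {f : M →ₗ[R] R ⧸ (Ideal.ofList rs • ⊤ : Submodule R R)}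
    {g : (R ⧸ (Ideal.ofList rs • ⊤ : Submodule R R)) →ₗ[R] C} (hfg : Function.Exact f g)
    (hf : Function.Injective f) (hg : Function.Surjective g)
    (hC : Subsingleton (ModuleExt R C R (rs.length + 1))) :
    Nonempty ((R ⧸ Module.annihilator R M) ≃ₗ[R] ModuleExt R M R rs.length) := by
  obtain ⟨c, hc⟩ := exists_comp_bijective hrs
  have hquot : Ideal.ofList rs ≤
      Module.annihilator R (R ⧸ (Ideal.ofList rs • ⊤ : Submodule R R)) :=
    le_annihilator_quotient_smul_top _
  have hannM : Ideal.ofList rs ≤ Module.annihilator R M :=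
    hquot.trans (f.annihilator_le_of_injective hf)
  let γ : ModuleExt R M R rs.length := (Ext.mk₀ (ModuleCat.ofHom f)).comp c (zero_add _)
  have hsmul (s : R) : (Ext.mk₀ (ModuleCat.ofHom (s • f))).comp c (zero_add _) = s • γ := by
    change (Ext.mk₀ (s • ModuleCat.ofHom f)).comp c _ = _
    rw [Ext.mk₀_smul, Ext.smul_comp]
  have hker : LinearMap.ker (LinearMap.toSpanSingleton R _ γ) = Module.annihilator R M := by
    ext s
    rw [LinearMap.mem_ker, LinearMap.toSpanSingleton_apply, Module.mem_annihilator]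
    refine ⟨fun hs y => hf ?_, fun hs => smul_eq_zero_of_mem_annihilator
      (Module.mem_annihilator.mpr hs) γ⟩
    have hsf : s • f = 0 := (hc M hannM).1 <| (hsmul s).trans <| hs.trans (by simp)
    rw [map_smul, map_zero]
    exact LinearMap.congr_fun hsf y
  have hsurj : Function.Surjective (LinearMap.toSpanSingleton R _ γ) := by
    intro e
    obtain ⟨e', rfl⟩ := Ext.contravariant_sequence_exact₁ (shortExact hfg hf hg) _ e
      (add_comm 1 _) (hC.elim _ _)
    obtain ⟨ψ, rfl⟩ := (hc _ hquot).2 e'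
    obtain ⟨s, rfl⟩ := exists_eq_smul_id_of_quotient ψ
    refine ⟨s, ?_⟩
    have hsc : (Ext.mk₀ (ModuleCat.ofHom (s • LinearMap.id))).comp c (zero_add _) = s • c :=
      mk₀_smul_id_comp s c
    simp only [hsc, Ext.comp_smul]
    rfl
  exact ⟨(Submodule.quotEquivOfEq _ _ hker.symm).trans
    (LinearMap.quotKerEquivOfSurjective _ hsurj)⟩

end ModuleExt

/-- The module `a/b` for `b ≤ a`, and `a/(a ∩ b)` in general. -/
abbrev Subquotient {R : Type*} [CommRing R] (a b : Ideal R) : Type _ :=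
  ↥a ⧸ Submodule.comap a.subtype b

namespace Subquotient

variable {R : Type*} [CommRing R] {a b I : Ideal R}

lemma nontrivial (hba : b < a) : Nontrivial (Subquotient a b) :=
  Submodule.Quotient.nontrivial_iff.mpr fun h => hba.not_ge (Submodule.comap_subtype_eq_top.mp h)

lemma exact_mapQ_factor (hIa : I ≤ a) :
    Function.Exact (Submodule.mapQ (Submodule.comap a.subtype I) I a.subtype le_rfl)
      (Submodule.factor hIa) := by
  rw [LinearMap.exact_iff, Submodule.factor, Submodule.ker_mapQ, Submodule.range_mapQ,
    Submodule.range_subtype, Submodule.comap_id]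

lemma mapQ_injective : Function.Injective
    (Submodule.mapQ (Submodule.comap a.subtype I) I a.subtype le_rfl) := by
  rw [← LinearMap.ker_eq_bot, Submodule.ker_mapQ, Submodule.mkQ_map_self]

lemma nonempty_quotient_span_singleton_equiv {g : R} (hIa : I ≤ a) (hg : g ∈ a) :
    Nonempty ((Subquotient a I ⧸ R ∙ (Submodule.Quotient.mk ⟨g, hg⟩ : Subquotient a I)) ≃ₗ[R]
      Subquotient a (I ⊔ Ideal.span {g})) := by
  have hmap : Submodule.map (Submodule.comap a.subtype I).mkQ
      (Submodule.comap a.subtype (I ⊔ Ideal.span {g})) =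
        R ∙ (Submodule.Quotient.mk ⟨g, hg⟩ : Subquotient a I) := by
    have hcomap : Submodule.comap a.subtype (I ⊔ Ideal.span {g}) =
        Submodule.comap a.subtype I ⊔ R ∙ (⟨g, hg⟩ : ↥a) := by
      refine Submodule.map_injective_of_injective a.subtype_injective ?_
      rw [Submodule.map_sup, Submodule.map_comap_subtype, Submodule.map_comap_subtype,
        Submodule.map_span, Set.image_singleton, inf_eq_right.mpr hIa, inf_eq_right.mpr
          (sup_le hIa ((Ideal.span_singleton_le_iff_mem _).mpr hg))]
      rfl
    rw [hcomap, Submodule.map_sup, Submodule.mkQ_map_self, bot_sup_eq, Submodule.map_span,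
      Set.image_singleton]
    rfl
  exact ⟨(Submodule.quotEquivOfEq _ _ hmap.symm).trans
    (Submodule.quotientQuotientEquivQuotient _ _ (Submodule.comap_mono le_sup_left))⟩

end Subquotient

section Linkage

variable {R M C : Type u} [CommRing R] [IsLocalRing R] [IsNoetherianRing R] [AddCommGroup M]
  [Module R M] [Module.Finite R M] [AddCommGroup C] [Module R C] [Module.Finite R C] {n : ℕ}
  {rs : List R}

lemma ModuleExt.subsingleton_of_hasDepthGE {d i : ℕ} (hC : IsExtConcentrated R C d)
    (hM : HasDepthGE R M n) (h : d < i + n) : Subsingleton (ModuleExt R M C i) := by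
  rcases subsingleton_or_nontrivial M with _ | _
  · exact subsingleton_of_subsingleton_left i
  · obtain ⟨rs, rfl, hrs, hreg⟩ := hM.exists_isRegular
    exact subsingleton_of_isWeaklyRegular hC hrs hreg.1 h

lemma supportDim_quotient_ofList_smul_top_le [Nontrivial M] (hrs : ∀ x ∈ rs, x ∈ maximalIdeal R)
    (hreg : IsWeaklyRegular M rs) (hdim : Module.supportDim R M ≤ (n + rs.length : ℕ)) :
    Module.supportDim R (M ⧸ (Ideal.ofList rs • ⊤ : Submodule R M)) ≤ n := by
  rw [← Module.supportDim_add_length_eq_supportDim_of_isRegular rs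
    ((IsLocalRing.isRegular_iff_isWeaklyRegular_of_subset_maximalIdeal hrs).mpr hreg),
    Nat.cast_add] at hdim
  exact ENat.WithBot.add_le_add_natCast_right_iff.mp hdim

namespace HasDepthGE

lemma quotient_annihilator [Nontrivial M] (hR : IsExtConcentrated R R (n + rs.length))
    (hrs : IsWeaklyRegular R rs)
    {f : M →ₗ[R] R ⧸ (Ideal.ofList rs • ⊤ : Submodule R R)}
    {g : (R ⧸ (Ideal.ofList rs • ⊤ : Submodule R R)) →ₗ[R] C} (hfg : Function.Exact f g)
    (hf : Function.Injective f) (hg : Function.Surjective g) (hM : HasDepthGE R M n)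
    (hdim : Module.supportDim R M ≤ n) (hC : HasDepthGE R C n) :
    HasDepthGE R (R ⧸ Module.annihilator R M) n := by
  obtain ⟨e⟩ := ModuleExt.nonempty_quotient_annihilator_equiv hrs hfg hf hg
    (ModuleExt.subsingleton_of_hasDepthGE hR hC (by omega))
  exact (hM.moduleExt hR hdim (add_comm _ _)).congr e.symm

theorem subquotient_ofList_sup_span_singleton {a : Ideal R} {g : R}
    (hdim : ringKrullDim R = (n + 1 + rs.length : ℕ))
    (hR : IsExtConcentrated R R (n + 1 + rs.length)) (hrs : ∀ x ∈ rs, x ∈ maximalIdeal R)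
    (hreg : IsWeaklyRegular R rs) (hba : Ideal.ofList rs ⊔ Ideal.span {g} < a)
    (ha : HasDepthGE R (R ⧸ a) (n + 1))
    (hsupp : Module.supportDim R (Subquotient a (Ideal.ofList rs ⊔ Ideal.span {g})) ≤ n) :
    HasDepthGE R (Subquotient a (Ideal.ofList rs ⊔ Ideal.span {g})) n := by
  set I : Ideal R := Ideal.ofList rs • ⊤ with hI
  have hIrs : I = Ideal.ofList rs := Ideal.mul_top _
  rw [← hIrs] at hba hsupp ⊢
  have hIa : I < a := le_sup_left.trans_lt hba
  have hga : g ∈ a := hba.le (Ideal.mem_sup_right (Ideal.mem_span_singleton_self g))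
  have := Subquotient.nontrivial hIa
  have hexact := Subquotient.exact_mapQ_factor hIa.le
  have hinj := Subquotient.mapQ_injective (a := a) (I := I)
  have hM : HasDepthGE R (Subquotient a I) (n + 1) :=
    kernel hexact hinj (Submodule.factor_surjective hIa.le)
      (hR.hasDepthGE.quotient_ofList_smul_top hreg) (ha.mono n.le_succ)
  have hdimM : Module.supportDim R (Subquotient a I) ≤ (n + 1 : ℕ) :=
    (Module.supportDim_le_of_injective _ hinj).trans <|
      supportDim_quotient_ofList_smul_top_le hrs hreg
        ((Module.supportDim_le_ringKrullDim R R).trans hdim.le)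
  obtain ⟨e⟩ := Subquotient.nonempty_quotient_span_singleton_equiv hIa.le hga
  have hann := quotient_annihilator hR hreg hexact hinj (Submodule.factor_surjective hIa.le) hM
    hdimM ha
  exact (hM.quotient_span_singleton hann ((Module.supportDim_eq_of_equiv e).trans_le hsupp)).congr e

end HasDepthGE

end Linkage

/-! ### Regular sequences in general position -/

-- Prime avoidance on the coset `x + J`: correct `y` at one minimal prime at a time, without
-- disturbing the others.
lemma exists_add_notMem_of_forall_isPrime {R : Type*} [CommRing R] {x : R} {J : Ideal R}
    (s : Finset (Ideal R)) (hs : ∀ P ∈ s, P.IsPrime) (h : ∀ P ∈ s, x ∈ P → ¬ J ≤ P) :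
    ∃ y ∈ J, ∀ P ∈ s, x + y ∉ P := by
  classical
  induction s using Finset.strongInduction with
  | H s ih =>
  rcases s.eq_empty_or_nonempty with rfl | hne
  · exact ⟨0, J.zero_mem, by simp⟩
  obtain ⟨P, hP⟩ := s.exists_minimal hne
  have := hs P hP.prop
  obtain ⟨y, hyJ, hy⟩ := ih (s.erase P) (Finset.erase_ssubset hP.prop)
    (fun Q hQ => hs Q (Finset.mem_of_mem_erase hQ)) fun Q hQ => h Q (Finset.mem_of_mem_erase hQ)
  by_cases hxy : x + y ∈ P
  · have hJP : ¬ J ≤ P := fun hJP => h P hP.prop ((P.add_mem_iff_left (hJP hyJ)).mp hxy) hJP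
    have hinf : ¬ J ⊓ (s.erase P).inf id ≤ P := by
      rw [this.inf_le, not_or, this.inf_le']
      refine ⟨hJP, fun ⟨Q, hQ, hQP⟩ => Finset.ne_of_mem_erase hQ ?_⟩
      exact le_antisymm hQP (hP.le_of_le (Finset.mem_of_mem_erase hQ) hQP)
    obtain ⟨z, ⟨hzJ, hz⟩, hzP⟩ := SetLike.not_le_iff_exists.mp hinf
    refine ⟨y + z, J.add_mem hyJ hzJ, fun Q hQ => ?_⟩
    rw [← add_assoc]
    by_cases hQP : Q = P
    · rwa [hQP, P.add_mem_iff_right hxy]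
    · have hQ' := Finset.mem_erase.mpr ⟨hQP, hQ⟩
      rw [Q.add_mem_iff_left (Finset.inf_le (f := id) hQ' hz)]
      exact hy Q hQ'
  · refine ⟨y, hyJ, fun Q hQ => ?_⟩
    by_cases hQP : Q = P
    · rwa [hQP]
    · exact hy Q (Finset.mem_erase.mpr ⟨hQP, hQ⟩)

section GeneralPosition

variable {R : Type u} [CommRing R]

lemma exists_add_isSMulRegular [IsNoetherianRing R] {M : Type u} [AddCommGroup M] [Module R M]
    [Module.Finite R M] {x : R} {J : Ideal R}
    (h : ∀ P ∈ associatedPrimes R M, x ∈ P → ¬ J ≤ P) : ∃ y ∈ J, IsSMulRegular M (x + y) := by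
  obtain ⟨y, hyJ, hy⟩ := exists_add_notMem_of_forall_isPrime
    (associatedPrimes.finite R M).toFinset
    (fun P hP => ((Set.Finite.mem_toFinset _).mp hP).isPrime)
    fun P hP => h P ((Set.Finite.mem_toFinset _).mp hP)
  refine ⟨y, hyJ, of_not_not fun hreg => ?_⟩
  obtain ⟨P, hP, hxP⟩ := Set.mem_iUnion₂.mp
    ((biUnion_associatedPrimes_eq_compl_regular R M).superset hreg)
  exact hy P ((Set.Finite.mem_toFinset _).mpr hP) hxP

lemma span_singleton_add_sup_eq {x y : R} {J : Ideal R} (hy : y ∈ J) :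
    Ideal.span {x + y} ⊔ J = Ideal.span {x} ⊔ J := by
  refine le_antisymm (sup_le ?_ le_sup_right) (sup_le ?_ le_sup_right) <;>
    rw [Ideal.span_singleton_le_iff_mem]
  · exact Submodule.add_mem_sup (Ideal.mem_span_singleton_self x) hy
  · simpa using Submodule.add_mem_sup (Ideal.mem_span_singleton_self (x + y)) (J.neg_mem hy)

variable [IsLocalRing R] [IsNoetherianRing R]

lemma exists_isWeaklyRegular_ofList_sup_eq {d : ℕ} (hR : HasDepthGE R R d) (us : List R)
    (J : Ideal R) (hm : Ideal.ofList us ⊔ J ≤ maximalIdeal R)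
    (hdim : ∀ P : Ideal R, P.IsPrime → Ideal.ofList us ⊔ J ≤ P →
      ringKrullDim (R ⧸ P) + us.length ≤ d) :
    ∃ rs : List R, rs.length = us.length ∧ IsWeaklyRegular R rs ∧
      Ideal.ofList rs ⊔ J = Ideal.ofList us ⊔ J := by
  induction us generalizing J with
  | nil => exact ⟨[], rfl, IsWeaklyRegular.nil _ _, rfl⟩
  | cons x us ih =>
    have hswap : Ideal.ofList us ⊔ (Ideal.span {x} ⊔ J) = Ideal.ofList (x :: us) ⊔ J := by
      rw [Ideal.ofList_cons, sup_left_comm, sup_assoc]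
    rw [← hswap] at hm hdim
    rw [List.length_cons] at hdim ⊢
    obtain ⟨rs, hlen, hreg, hsup⟩ := ih (Ideal.span {x} ⊔ J) hm fun P hP hle =>
      le_trans (by gcongr; exact us.length.le_succ) (hdim P hP hle)
    -- Such a `P` has `dim R/P ≥ d - |rs|`, one more than `hdim` allows if `P` contains `x` and `J`.
    have hass : ∀ P ∈ associatedPrimes R (R ⧸ (Ideal.ofList rs • ⊤ : Submodule R R)),
        x ∈ P → ¬ J ≤ P := by
      intro P hP hxP hJP
      have := hP.isPrime
      have hrsP : Ideal.ofList rs ≤ P := (le_annihilator_quotient_smul_top ..).trans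
        (Submodule.annihilator_top.ge.trans hP.annihilator_le)
      have hle := hdim P hP.isPrime <| hsup ▸
        sup_le hrsP (sup_le ((Ideal.span_singleton_le_iff_mem _).mpr hxP) hJP)
      have hlt : us.length + 1 ≤ d :=
        Nat.cast_le.mp ((le_add_of_nonneg_left ringKrullDim_nonneg_of_nontrivial).trans hle)
      obtain ⟨n, rfl⟩ := Nat.exists_eq_add_of_le' hlt
      have hn : HasDepthGE R (R ⧸ (Ideal.ofList rs • ⊤ : Submodule R R)) (n + 1) :=
        (hR.mono (by omega)).quotient_ofList_smul_top hreg
      have := (add_le_add_left (hn.natCast_le_ringKrullDim_quotient hP) _).trans hle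
      rw [← Nat.cast_add, Nat.cast_le] at this
      omega
    obtain ⟨y, hyJ, hy⟩ := exists_add_isSMulRegular hass
    refine ⟨rs ++ [x + y], by rw [List.length_append, hlen, List.length_singleton],
      (isWeaklyRegular_append_iff ..).mpr ⟨hreg, (isWeaklyRegular_singleton_iff ..).mpr hy⟩, ?_⟩
    rw [Ideal.ofList_append, Ideal.ofList_singleton, sup_assoc, span_singleton_add_sup_eq hyJ, hsup,
      hswap]

end GeneralPosition

/-! ### Regular local rings are Gorenstein -/

lemma exists_mem_support_natCast_le_ringKrullDim_quotient {R M : Type*} [CommRing R]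
    [AddCommGroup M] [Module R M] {n : ℕ} (h : n ≤ Module.supportDim R M) :
    ∃ p ∈ Module.support R M, (n : WithBot ℕ∞) ≤ ringKrullDim (R ⧸ p.asIdeal) := by
  obtain ⟨l, rfl⟩ := Order.le_krullDim_iff.mp h
  refine ⟨l.head, l.head.2, ?_⟩
  rw [ringKrullDim_quotient]
  let f : Fin (l.length + 1) → PrimeSpectrum.zeroLocus (l.head.1.asIdeal : Set R) :=
    fun i => ⟨(l i).1, l.head_le i⟩
  exact Order.le_krullDim_iff.mpr ⟨⟨l.length, f, fun i => l.step i⟩, rfl⟩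

section RegularParameters

variable {R : Type u} [CommRing R]

lemma nonempty_quotSMulTop_quotient_equiv (I : Ideal R) (x : R) :
    Nonempty (QuotSMulTop x (R ⧸ I) ≃ₗ[R] R ⧸ (I ⊔ Ideal.span {x})) := by
  have hmap : (x • ⊤ : Submodule R (R ⧸ I)) = Submodule.map I.mkQ (Ideal.span {x}) := by
    rw [← mul_one (Ideal.span {x}), Ideal.one_eq_top, ← smul_eq_mul,
      Submodule.ideal_span_singleton_smul, Submodule.map_pointwise_smul, Submodule.map_top,
      Submodule.range_mkQ]
  exact ⟨(Submodule.quotEquivOfEq _ _ hmap).trans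
    (Submodule.quotientQuotientEquivQuotientSup _ _)⟩

variable [IsLocalRing R] {I : Ideal R} {x : R} {vs : List R}

lemma mem_maximalIdeal_and_sup_ofList_eq (h : I ⊔ Ideal.ofList (x :: vs) = maximalIdeal R) :
    x ∈ maximalIdeal R ∧ I ⊔ Ideal.span {x} ⊔ Ideal.ofList vs = maximalIdeal R := by
  rw [Ideal.ofList_cons, ← sup_assoc] at h
  exact ⟨h.le (Ideal.mem_sup_left (Ideal.mem_sup_right (Ideal.mem_span_singleton_self x))), h⟩

variable [IsNoetherianRing R]

lemma ringKrullDim_quotient_le_ringKrullDim_quotient_sup_add_one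
    (hx : x ∈ maximalIdeal R) :
    ringKrullDim (R ⧸ I) ≤ ringKrullDim (R ⧸ (I ⊔ Ideal.span {x})) + 1 := by
  obtain ⟨e⟩ := nonempty_quotSMulTop_quotient_equiv I x
  rw [← Module.supportDim_quotient_eq_ringKrullDim, ← Module.supportDim_quotient_eq_ringKrullDim,
    ← Module.supportDim_eq_of_equiv e]
  exact Module.supportDim_le_supportDim_quotSMulTop_succ hx

lemma le_of_le_sup_span_singleton {Q : Ideal R} [hQ : Q.IsPrime] (hIQ : I ≤ Q)
    (hx : x ∈ maximalIdeal R) (hxQ : x ∉ Q) (hQI : Q ≤ I ⊔ Ideal.span {x}) : Q ≤ I := by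
  refine Submodule.le_of_le_smul_of_le_jacobson_bot (IsNoetherian.noetherian Q)
    (((Ideal.span_singleton_le_iff_mem _).mpr hx).trans (maximalIdeal_le_jacobson ⊥)) ?_
  intro z hz
  obtain ⟨y, hy, w, hw, rfl⟩ := Submodule.mem_sup.mp (hQI hz)
  obtain ⟨w, rfl⟩ := Ideal.mem_span_singleton.mp hw
  have hwQ : w ∈ Q := (hQ.mem_or_mem ((Q.add_mem_iff_right (hIQ hy)).mp hz)).resolve_left hxQ
  exact Submodule.add_mem_sup hy
    (Submodule.smul_mem_smul (Ideal.mem_span_singleton_self x) hwQ)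

lemma ringKrullDim_quotient_le_length (h : I ⊔ Ideal.ofList vs = maximalIdeal R) :
    ringKrullDim (R ⧸ I) ≤ vs.length := by
  induction vs generalizing I with
  | nil =>
    rw [Ideal.ofList_nil, sup_bot_eq] at h
    rw [h]
    exact (ringKrullDim_eq_zero_of_field (ResidueField R)).le
  | cons x vs ih =>
    obtain ⟨hx, h⟩ := mem_maximalIdeal_and_sup_ofList_eq h
    exact (ringKrullDim_quotient_le_ringKrullDim_quotient_sup_add_one hx).trans
      (add_le_add_left (ih h) 1)

lemma notMem_of_length_le_ringKrullDim_quotient (h : I ⊔ Ideal.ofList (x :: vs) = maximalIdeal R)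
    (hdim : (x :: vs).length ≤ ringKrullDim (R ⧸ I)) : x ∉ I := by
  intro hxI
  obtain ⟨-, h⟩ := mem_maximalIdeal_and_sup_ofList_eq h
  rw [sup_eq_left.mpr ((Ideal.span_singleton_le_iff_mem _).mpr hxI)] at h
  exact vs.length.not_succ_le_self
    (Nat.cast_le.mp (hdim.trans (ringKrullDim_quotient_le_length h)))

-- A prime `p ⊇ Q + (x)` with `dim R/p ≥ |vs|` equals `I + (x)` by induction, so `Q ⊆ I + (x)`, and
-- Nakayama gives `Q ⊆ I`.
lemma eq_of_length_le_ringKrullDim_quotient (h : I ⊔ Ideal.ofList vs = maximalIdeal R)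
    {Q : Ideal R} (hQ : Q.IsPrime) (hIQ : I ≤ Q) (hdim : vs.length ≤ ringKrullDim (R ⧸ Q)) :
    Q = I := by
  induction vs generalizing I Q with
  | nil =>
    rw [Ideal.ofList_nil, sup_bot_eq] at h
    exact ((le_maximalIdeal hQ.ne_top).trans h.ge).antisymm hIQ
  | cons x vs ih =>
    have hQm : Q ⊔ Ideal.ofList (x :: vs) = maximalIdeal R :=
      (sup_le (le_maximalIdeal hQ.ne_top) (le_sup_right.trans h.le)).antisymm
        (h.ge.trans (sup_le_sup_right hIQ _))
    obtain ⟨hx, h⟩ := mem_maximalIdeal_and_sup_ofList_eq h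
    have hxQ := notMem_of_length_le_ringKrullDim_quotient hQm hdim
    rw [← Module.supportDim_quotient_eq_ringKrullDim, ←
      Module.supportDim_quotSMulTop_succ_eq_supportDim (isSMulRegular_quotient_of_notMem hxQ) hx,
      List.length_cons, Nat.cast_succ, ENat.WithBot.add_le_add_one_right_iff] at hdim
    obtain ⟨p, hp, hdimp⟩ := exists_mem_support_natCast_le_ringKrullDim_quotient hdim
    rw [Module.support_quotSMulTop, Module.support_eq_zeroLocus, Ideal.annihilator_quotient] at hp
    have hxp : Ideal.span {x} ≤ p.asIdeal := Ideal.span_le.mpr hp.2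
    have hp_eq := ih h p.2 (sup_le (hIQ.trans hp.1) hxp) hdimp
    exact (le_of_le_sup_span_singleton hIQ hx hxQ (hp_eq ▸ hp.1)).antisymm hIQ

lemma isPrime_of_length_le_ringKrullDim_quotient (h : I ⊔ Ideal.ofList vs = maximalIdeal R)
    (hdim : vs.length ≤ ringKrullDim (R ⧸ I)) : I.IsPrime := by
  rw [← Module.supportDim_quotient_eq_ringKrullDim] at hdim
  obtain ⟨p, hp, hdimp⟩ := exists_mem_support_natCast_le_ringKrullDim_quotient hdim
  rw [Module.support_eq_zeroLocus, Ideal.annihilator_quotient] at hp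
  exact eq_of_length_le_ringKrullDim_quotient h p.2 hp hdimp ▸ p.2

lemma isWeaklyRegular_quotient_of_length_le_ringKrullDim_quotient
    (h : I ⊔ Ideal.ofList vs = maximalIdeal R) (hdim : vs.length ≤ ringKrullDim (R ⧸ I)) :
    IsWeaklyRegular (R ⧸ I) vs := by
  induction vs generalizing I with
  | nil => exact IsWeaklyRegular.nil _ _
  | cons x vs ih =>
    have := isPrime_of_length_le_ringKrullDim_quotient h hdim
    have hxI := notMem_of_length_le_ringKrullDim_quotient h hdim
    obtain ⟨hx, h⟩ := mem_maximalIdeal_and_sup_ofList_eq h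
    obtain ⟨e⟩ := nonempty_quotSMulTop_quotient_equiv I x
    replace hdim := hdim.trans (ringKrullDim_quotient_le_ringKrullDim_quotient_sup_add_one hx)
    rw [List.length_cons, Nat.cast_succ, ENat.WithBot.add_le_add_one_right_iff] at hdim
    exact (isWeaklyRegular_cons_iff ..).mpr ⟨isSMulRegular_quotient_of_notMem hxI,
      (e.isWeaklyRegular_congr vs).mpr (ih h hdim)⟩

lemma isExtConcentrated_of_isWeaklyRegular (hreg : IsWeaklyRegular R vs)
    (h : Ideal.ofList vs = maximalIdeal R) : IsExtConcentrated R R vs.length := by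
  have hvs : ∀ x ∈ vs, x ∈ maximalIdeal R := fun x hx => h ▸ Ideal.subset_span hx
  intro i hi
  rcases hi.lt_or_gt with hlt | hgt
  · exact HasDepthGE.of_isWeaklyRegular hvs hreg i hlt
  · have hproj : HasProjectiveDimensionLE (ModuleCat.of R (Shrink.{u} (R ⧸ Ideal.ofList vs)))
        vs.length := (projectiveDimension_le_iff _ _).mp <|
      (ModuleCat.projectiveDimension_quotient_eq_length.{u} vs <|
        (IsLocalRing.isRegular_iff_isWeaklyRegular_of_subset_maximalIdeal hvs).mpr hreg).le
    have e : Shrink.{u} (R ⧸ Ideal.ofList vs) ≃ₗ[R] R ⧸ maximalIdeal R :=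
      (Shrink.linearEquiv R _).trans (Submodule.quotEquivOfEq _ _ h)
    exact (ModuleExt.subsingleton_congr_left e).mp
      (HasProjectiveDimensionLT.subsingleton _ (vs.length + 1) i hgt _)

variable (R) in
theorem isGorensteinLocalRing_of_exists_span_eq_maximalIdeal
    (h : ∃ v : Finset R, Ideal.span (v : Set R) = maximalIdeal R ∧ v.card = ringKrullDim R) :
    IsGorensteinLocalRing R := by
  obtain ⟨v, hspan, hdim⟩ := h
  have hv : Ideal.ofList v.toList = maximalIdeal R := by
    rw [← hspan, Ideal.ofList]
    simp only [Finset.mem_toList, SetLike.setOfPred_mem_eq]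
  rw [← Finset.length_toList] at hdim
  have hreg : IsWeaklyRegular (R ⧸ (⊥ : Ideal R)) v.toList :=
    isWeaklyRegular_quotient_of_length_le_ringKrullDim_quotient (by rw [bot_sup_eq, hv])
      (hdim.trans (ringKrullDim_eq_of_ringEquiv (RingEquiv.quotientBot R)).symm).le
  exact ⟨_, hdim.symm, isExtConcentrated_of_isWeaklyRegular
    (((Submodule.quotEquivOfEqBot _ rfl).isWeaklyRegular_congr _).mp hreg) hv⟩

end RegularParameters

/-! ### Cohen-Macaulay subquotients -/

section Localization

variable {R : Type*} [CommRing R] {a b q : Ideal R} [q.IsPrime]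

lemma exists_notMem_mul_mem_of_map_eq (h : a.map (algebraMap R (Localization.AtPrime q)) =
      b.map (algebraMap R (Localization.AtPrime q))) {x : R} (hx : x ∈ a) :
    ∃ s ∉ q, s * x ∈ b := by
  have hxb := h ▸ Ideal.mem_map_of_mem (algebraMap R (Localization.AtPrime q)) hx
  exact (IsLocalization.algebraMap_mem_map_algebraMap_iff q.primeCompl ..).mp hxb

lemma le_of_map_eq_of_le (h : a.map (algebraMap R (Localization.AtPrime q)) =
      b.map (algebraMap R (Localization.AtPrime q))) (hbq : b ≤ q) : a ≤ q := by
  intro x hx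
  obtain ⟨s, hs, hsx⟩ := exists_notMem_mul_mem_of_map_eq h hx
  exact (Ideal.IsPrime.mem_or_mem ‹_› (hbq hsx)).resolve_left hs

lemma Subquotient.notMem_support {p : PrimeSpectrum R}
    (h : a.map (algebraMap R (Localization.AtPrime p.asIdeal)) =
      b.map (algebraMap R (Localization.AtPrime p.asIdeal))) :
    p ∉ Module.support R (Subquotient a b) := by
  refine Module.notMem_support_iff'.mpr fun m => ?_
  obtain ⟨x, rfl⟩ := Submodule.Quotient.mk_surjective _ m
  obtain ⟨s, hs, hsx⟩ := exists_notMem_mul_mem_of_map_eq h x.2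
  exact ⟨s, hs, (Submodule.Quotient.mk_eq_zero (Submodule.comap a.subtype b) (x := s • x)).mpr hsx⟩

end Localization

lemma exists_add_eq_supportDim_le {R M : Type*} [CommRing R] [AddCommGroup M] [Module R M]
    [Nontrivial M] {d k : ℕ}
    (h : ∀ p ∈ Module.support R M, ringKrullDim (R ⧸ p.asIdeal) + k ≤ d) :
    ∃ n : ℕ, n + k = d ∧ Module.supportDim R M ≤ n := by
  have hkd : k ≤ d :=
    have ⟨p, hp⟩ := Module.nonempty_support_of_nontrivial (R := R) (M := M)
    Nat.cast_le.mp ((le_add_of_nonneg_left ringKrullDim_nonneg_of_nontrivial).trans (h p hp))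
  refine ⟨d - k, Nat.sub_add_cancel hkd, ?_⟩
  by_contra! hlt
  obtain ⟨p, hp, hle⟩ := exists_mem_support_natCast_le_ringKrullDim_quotient
    (n := d - k + 1) (ENat.WithBot.add_one_le_iff.mpr hlt)
  have hsucc : d - k + 1 + k ≤ d := Nat.cast_le.mp ((add_le_add_left hle _).trans (h p hp))
  omega

section GorensteinLocalRing

variable {R : Type u} [CommRing R] [IsLocalRing R] [IsNoetherianRing R]

lemma exists_isWeaklyRegular_ofList_sup_span_singleton_eq {d r : ℕ} (hR : HasDepthGE R R d)
    {v : Fin (r + 1) → R} (hm : Ideal.span (Set.range v) ≤ maximalIdeal R)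
    (hdim : ∀ P : Ideal R, P.IsPrime → Ideal.span (Set.range v) ≤ P →
      ringKrullDim (R ⧸ P) + r ≤ d) :
    ∃ (rs : List R) (g : R), rs.length = r ∧ IsWeaklyRegular R rs ∧
      Ideal.ofList rs ⊔ Ideal.span {g} = Ideal.span (Set.range v) := by
  have hv : Ideal.ofList (List.ofFn fun i : Fin r => v i.castSucc) ⊔
      Ideal.span {v (Fin.last r)} = Ideal.span (Set.range v) := by
    rw [Ideal.ofList, ← Ideal.span_union]
    congr 1
    ext x
    simp [Fin.exists_fin_succ', or_comm, eq_comm]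
  rw [← hv] at hm hdim ⊢
  obtain ⟨rs, hlen, hreg, hsup⟩ := exists_isWeaklyRegular_ofList_sup_eq hR _ _ hm (by
    simpa only [List.length_ofFn] using hdim)
  exact ⟨rs, _, hlen.trans List.length_ofFn, hreg, hsup⟩

lemma HasDepthGE.subquotient_span_range {n r : ℕ} (hdim : ringKrullDim R = (n + 1 + r : ℕ))
    (hR : IsExtConcentrated R R (n + 1 + r)) {a : Ideal R} {v : Fin (r + 1) → R}
    (hva : Ideal.span (Set.range v) < a) (ha : HasDepthGE R (R ⧸ a) (n + 1))
    (hprime : ∀ P : Ideal R, P.IsPrime → Ideal.span (Set.range v) ≤ P →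
      ringKrullDim (R ⧸ P) + r ≤ (n + 1 + r : ℕ))
    (hsupp : Module.supportDim R (Subquotient a (Ideal.span (Set.range v))) ≤ n) :
    HasDepthGE R (Subquotient a (Ideal.span (Set.range v))) n := by
  have hvm := le_maximalIdeal hva.ne_top
  obtain ⟨rs, g, rfl, hreg, hsup⟩ :=
    exists_isWeaklyRegular_ofList_sup_span_singleton_eq hR.hasDepthGE hvm hprime
  have hrs : ∀ x ∈ rs, x ∈ maximalIdeal R := fun x hx =>
    hvm (hsup ▸ Ideal.mem_sup_left (Ideal.subset_span hx))
  rw [← hsup] at hva hsupp ⊢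
  exact HasDepthGE.subquotient_ofList_sup_span_singleton hdim hR hrs hreg hva ha hsupp

end GorensteinLocalRing

lemma ringKrullDim_quotient_add_le_of_map_eq {R : Type*} [CommRing R] {a b P : Ideal R}
    [P.IsPrime] {d : WithBot ℕ∞} {r : ℕ} (hbP : b ≤ P) (ha : ringKrullDim (R ⧸ a) + r ≤ d)
    (h : d < ringKrullDim (R ⧸ P) + (r + 1 : ℕ) → a.map (algebraMap R (Localization.AtPrime P)) =
      b.map (algebraMap R (Localization.AtPrime P))) :
    ringKrullDim (R ⧸ P) + r ≤ d := by
  by_cases hlt : d < ringKrullDim (R ⧸ P) + (r + 1 : ℕ)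
  · have haP := le_of_map_eq_of_le (h hlt) hbP
    refine le_trans ?_ ha
    gcongr
    exact ringKrullDim_le_of_surjective _ (Ideal.Quotient.factor_surjective haP)
  · refine le_trans ?_ (not_lt.mp hlt)
    gcongr
    exact r.le_succ

theorem stmt_0_general {S : Type u} [CommRing S] [IsLocalRing S] [IsNoetherianRing S]
    (hS : IsGorensteinLocalRing S) (r : ℕ) (a b : Ideal S)
    (hCM : (moduleDepth S (S ⧸ a) : WithBot ℕ∞) = ringKrullDim (S ⧸ a))
    (hdima : ringKrullDim (S ⧸ a) + r = ringKrullDim S)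
    (hbgen : ∃ v : Fin (r + 1) → S, b = Ideal.span (Set.range v)) (hba : b < a)
    (hloc : ∀ (q : Ideal S) [q.IsPrime],
      ringKrullDim S < ringKrullDim (S ⧸ q) + ((r + 1 : ℕ) : WithBot ℕ∞) →
        a.map (algebraMap S (Localization.AtPrime q)) =
          b.map (algebraMap S (Localization.AtPrime q))) :
    (moduleDepth S (Subquotient a b) : WithBot ℕ∞) = Module.supportDim S (Subquotient a b) ∧
      Module.supportDim S (Subquotient a b) + ((r + 1 : ℕ) : WithBot ℕ∞) = ringKrullDim S := by
  obtain ⟨d, hd, hS⟩ := hS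
  obtain ⟨v, rfl⟩ := hbgen
  have := Subquotient.nontrivial hba
  obtain ⟨n, hn, hsupp⟩ := exists_add_eq_supportDim_le (k := r + 1) (d := d) fun p hp =>
    not_lt.mp fun hlt => Subquotient.notMem_support (hloc p.asIdeal (hd.trans_lt hlt)) hp
  obtain rfl : n + 1 + r = d := by omega
  have hdimQ : ringKrullDim (S ⧸ a) = (n + 1 : ℕ) := by
    rw [hd, Nat.cast_add (n + 1) r] at hdima
    exact ENat.WithBot.add_natCast_cancel.mp hdima
  have : Nontrivial (S ⧸ a) := not_subsingleton_iff_nontrivial.mp fun _ =>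
    WithBot.bot_ne_natCast _ (ringKrullDim_eq_bot_of_subsingleton.symm.trans hdimQ)
  have ha : HasDepthGE S (S ⧸ a) (n + 1) :=
    natCast_le_moduleDepth_iff.mp (WithBot.coe_le_coe.mp (hCM.trans hdimQ).ge)
  have hdepth := HasDepthGE.subquotient_span_range hd hS hba ha
    (fun P _ hP => ringKrullDim_quotient_add_le_of_map_eq hP (hdima.trans hd).le
      (hd ▸ hloc P)) hsupp
  obtain ⟨hdepth_eq, hdim_eq⟩ := hdepth.moduleDepth_eq_and_supportDim_eq hsupp
  rw [hdepth_eq, hdim_eq, hd, ← hn]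
  exact ⟨rfl, (Nat.cast_add n (r + 1)).symm⟩

/-- Let `(S, 𝔫)` be a regular local ring, `r ≥ 1`, and `𝔞, 𝔟 ⊆ S` ideals
such that: `S/𝔞` is Cohen–Macaulay with `dim (S/𝔞) = dim S - r`; `𝔟` is generated by `r + 1`
elements and `𝔟 ⊊ 𝔞`; and `𝔞_q = 𝔟_q` for every prime `q` with `dim (S/q) > dim S - (r+1)`.
Then `𝔞/𝔟` is a Cohen–Macaulay `S`-module with `dim Supp (𝔞/𝔟) = dim S - (r+1)`. -/
theorem stmt_0 {S : Type*} [CommRing S] [IsLocalRing S] [IsNoetherianRing S]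
    (hregular : ∃ v : Finset S, Ideal.span (v : Set S) = maximalIdeal S ∧
      (v.card : WithBot ℕ∞) = Order.krullDim (PrimeSpectrum S))
    (r : ℕ) (hr : 1 ≤ r) (a b : Ideal S)
    (hCM : (moduleDepth S (S ⧸ a) : WithBot ℕ∞) = Order.krullDim (PrimeSpectrum (S ⧸ a)))
    (hdima : Order.krullDim (PrimeSpectrum (S ⧸ a)) + (r : WithBot ℕ∞) = Order.krullDim (PrimeSpectrum S))
    (hbgen : ∃ v : Fin (r + 1) → S, b = Ideal.span (Set.range v))
    (hba : b < a)
    (hloc : ∀ (q : Ideal S) [q.IsPrime],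
      Order.krullDim (PrimeSpectrum S) < Order.krullDim (PrimeSpectrum (S ⧸ q)) + ((r + 1 : ℕ) : WithBot ℕ∞) →
      Ideal.map (algebraMap S (Localization.AtPrime q)) a =
        Ideal.map (algebraMap S (Localization.AtPrime q)) b) :
    (moduleDepth S (↥a ⧸ Submodule.comap a.subtype b) : WithBot ℕ∞) =
        Order.krullDim ↥(Module.support S (↥a ⧸ Submodule.comap a.subtype b)) ∧
      Order.krullDim ↥(Module.support S (↥a ⧸ Submodule.comap a.subtype b)) + ((r + 1 : ℕ) : WithBot ℕ∞) = Order.krullDim (PrimeSpectrum S) := by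
  exact stmt_0_general (isGorensteinLocalRing_of_exists_span_eq_maximalIdeal S hregular)
    r a b hCM hdima hbgen hba hloc
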